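/- arXiv:2603.21671 — 4 statements merged into one kernel-verified Lean document; each statement's English description precedes it below -/
import Mathlib

section
/- (Alexandrov in one dimension.) Let f : ℝ → ℝ be a convex function. Then for Lebesgue-almost every x ∈ ℝ there exist real numbers p and q such that lim_{r → 0} (f(x + r) − f(x) − p r − (q/2) r²)/r² = 0; that is, f is twice differentiable in the Peano sense at almost every point. -/
open Filter
open scoped Topology

/-!
The right derivative of a convex function is monotone, hence differentiable almost everywhere by
Lebesgue's theorem. At a point `x` where the right derivative `g` has derivative `q`, the remainder
`f y - f x - (y - x) g(x) - (y - x)² q / 2` has right derivative `g y - g x - (y - x) q = o(y - x)`.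
The mean value inequality only needs right derivatives, and it makes the remainder `o((y - x)²)`.
-/

open Set Asymptotics MeasureTheory

section RightDerivative

variable {E : Type*} [NormedAddCommGroup E] [NormedSpace ℝ E] {f f' : ℝ → E} {x : ℝ}

theorem norm_sub_le_of_norm_deriv_right_le_uIcc {a b C : ℝ}
    (hf : ContinuousOn f (uIcc a b))
    (hf' : ∀ y ∈ Ico (min a b) (max a b), HasDerivWithinAt f (f' y) (Ici y) y)
    (bound : ∀ y ∈ Ico (min a b) (max a b), ‖f' y‖ ≤ C) :
    ‖f b - f a‖ ≤ C * |b - a| := by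
  wlog hab : a ≤ b generalizing a b
  · rw [norm_sub_rev, abs_sub_comm]
    exact this (uIcc_comm a b ▸ hf) (by rwa [min_comm, max_comm]) (by rwa [min_comm, max_comm])
      (le_of_not_ge hab)
  rw [uIcc_of_le hab] at hf
  rw [min_eq_left hab, max_eq_right hab] at hf' bound
  rw [abs_of_nonneg (sub_nonneg.2 hab)]
  exact norm_image_sub_le_of_norm_deriv_right_le_segment hf hf' bound b (right_mem_Icc.2 hab)

theorem isLittleO_pow_succ_of_deriv_right {n : ℕ}
    (hf : ∀ᶠ y in 𝓝 x, ContinuousAt f y)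
    (hf' : ∀ᶠ y in 𝓝 x, HasDerivWithinAt f (f' y) (Ici y) y)
    (hf'_isLittleO : f' =o[𝓝 x] fun y ↦ (y - x) ^ n) :
    (fun y ↦ f y - f x) =o[𝓝 x] fun y ↦ (y - x) ^ (n + 1) := by
  refine isLittleO_iff.2 fun c hc ↦ ?_
  have near := hf.and (hf'.and (isLittleO_iff.1 hf'_isLittleO hc))
  have near_on_uIcc := (tendsto_const_nhds.uIcc tendsto_id).eventually
    (eventually_smallSets_forall.2 near)
  filter_upwards [near_on_uIcc] with y hy
  have deriv_bound : ∀ z ∈ Ico (min x y) (max x y), ‖f' z‖ ≤ c * |y - x| ^ n := fun z hz ↦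
    calc ‖f' z‖ ≤ c * ‖(z - x) ^ n‖ := (hy z (Ico_subset_Icc_self hz)).2.2
      _ = c * |z - x| ^ n := by rw [norm_pow, Real.norm_eq_abs]
      _ ≤ c * |y - x| ^ n := by
        gcongr ?_ * ?_ ^ n
        exact abs_sub_left_of_mem_uIcc (Ico_subset_Icc_self hz)
  calc ‖f y - f x‖ ≤ c * |y - x| ^ n * |y - x| :=
        norm_sub_le_of_norm_deriv_right_le_uIcc
          (fun z hz ↦ (hy z hz).1.continuousWithinAt)
          (fun z hz ↦ (hy z (Ico_subset_Icc_self hz)).2.1) deriv_bound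
    _ = c * ‖(y - x) ^ (n + 1)‖ := by rw [norm_pow, Real.norm_eq_abs, pow_succ, mul_assoc]

/-- Second differentiability of `f` at `x` in the Peano sense, with first-order coefficient `p` and
second-order coefficient `q`. As in Taylor's formula, the quadratic term is `q / 2` times the
square of the increment. -/
def HasPeanoSecondDerivAt (f : ℝ → E) (p q : E) (x : ℝ) : Prop :=
  (fun y ↦ f y - f x - (y - x) • p - ((y - x) ^ 2 / 2) • q) =o[𝓝 x] fun y ↦ (y - x) ^ 2

theorem hasPeanoSecondDerivAt_of_hasDerivAt_deriv_right {q : E}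
    (hf : ∀ᶠ y in 𝓝 x, ContinuousAt f y)
    (hf' : ∀ᶠ y in 𝓝 x, HasDerivWithinAt f (f' y) (Ici y) y) (hq : HasDerivAt f' q x) :
    HasPeanoSecondDerivAt f (f' x) q x := by
  let remainder : ℝ → E := fun y ↦ f y - f x - (y - x) • f' x - ((y - x) ^ 2 / 2) • q
  have remainder_continuousAt : ∀ᶠ y in 𝓝 x, ContinuousAt remainder y := by
    filter_upwards [hf] with y hy
    fun_prop
  have remainder_deriv_right : ∀ᶠ y in 𝓝 x,
      HasDerivWithinAt remainder (f' y - f' x - (y - x) • q) (Ici y) y := by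
    filter_upwards [hf'] with y hy
    have linear : HasDerivAt (fun z ↦ (z - x) • f' x) (f' x) y := by
      simpa using ((hasDerivAt_id y).sub_const x).smul_const (f' x)
    have quadratic : HasDerivAt (fun z ↦ ((z - x) ^ 2 / 2) • q) ((y - x) • q) y := by
      simpa using ((((hasDerivAt_id y).sub_const x).pow 2).div_const 2).smul_const q
    exact ((hy.sub_const (f x)).sub linear.hasDerivWithinAt).sub quadratic.hasDerivWithinAt
  have deriv_isLittleO : (fun y ↦ f' y - f' x - (y - x) • q) =o[𝓝 x] fun y ↦ (y - x) ^ 1 := by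
    simpa only [pow_one] using hq.isLittleO
  have remainder_self : remainder x = 0 := by simp [remainder]
  simpa only [HasPeanoSecondDerivAt, remainder, remainder_self, sub_zero, one_add_one_eq_two] using
    isLittleO_pow_succ_of_deriv_right remainder_continuousAt remainder_deriv_right deriv_isLittleO

end RightDerivative

theorem HasPeanoSecondDerivAt.tendsto {f : ℝ → ℝ} {p q x : ℝ}
    (h : HasPeanoSecondDerivAt f p q x) :
    Tendsto (fun r : ℝ ↦ (f (x + r) - f x - p * r - (q / 2) * r ^ 2) / r ^ 2) (𝓝[≠] 0) (𝓝 0) := by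
  have translate : Tendsto (fun r ↦ x + r) (𝓝 0) (𝓝 x) := by
    simpa using (continuous_const_add x).tendsto 0
  refine ((h.comp_tendsto translate).tendsto_div_nhds_zero.mono_left nhdsWithin_le_nhds).congr ?_
  intro r
  simp only [Function.comp_apply, add_sub_cancel_left, smul_eq_mul]
  ring

section Convex

theorem ae_mem_interior_of_convex {E : Type*} [NormedAddCommGroup E] [NormedSpace ℝ E]
    [FiniteDimensional ℝ E] [MeasurableSpace E] [BorelSpace E] (μ : Measure E)
    [μ.IsAddHaarMeasure] {S : Set E} (hS : Convex ℝ S) : ∀ᵐ x ∂μ, x ∈ S → x ∈ interior S := by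
  filter_upwards [measure_eq_zero_iff_ae_notMem.1 (hS.addHaar_frontier μ)] with x hx hxS
  exact by_contra fun hxi ↦ hx ⟨subset_closure hxS, hxi⟩

variable {S : Set ℝ} {f : ℝ → ℝ}

theorem hasPeanoSecondDerivAt_of_convexOn {x : ℝ}
    (hf : ConvexOn ℝ S f) (hx : x ∈ interior S)
    (hd : DifferentiableAt ℝ (fun y ↦ derivWithin f (Ioi y) y) x) :
    HasPeanoSecondDerivAt f (derivWithin f (Ioi x) x)
      (deriv (fun y ↦ derivWithin f (Ioi y) y) x) x := by
  have near : ∀ᶠ y in 𝓝 x, y ∈ interior S := isOpen_interior.mem_nhds hx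
  refine hasPeanoSecondDerivAt_of_hasDerivAt_deriv_right
    (f' := fun y ↦ derivWithin f (Ioi y) y) ?_ ?_ hd.hasDerivAt
  · exact near.mono fun y hy ↦ hf.continuousOn_interior.continuousAt (isOpen_interior.mem_nhds hy)
  · exact near.mono fun y hy ↦ (hf.hasDerivWithinAt_rightDeriv_of_mem_interior hy).Ici_of_Ioi

theorem ae_differentiableAt_rightDeriv_of_convexOn (hf : ConvexOn ℝ S f) :
    ∀ᵐ x, x ∈ interior S → DifferentiableAt ℝ (fun y ↦ derivWithin f (Ioi y) y) x := by
  filter_upwards [hf.monotoneOn_rightDeriv.ae_differentiableWithinAt_of_mem] with x hx hxS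
  exact (hx hxS).differentiableAt (isOpen_interior.mem_nhds hxS)

theorem alexandrov_one_dim_general (hf : ConvexOn ℝ S f) :
    ∀ᵐ x, x ∈ S → ∃ p q : ℝ, HasPeanoSecondDerivAt f p q x := by
  filter_upwards [ae_mem_interior_of_convex volume hf.1,
    ae_differentiableAt_rightDeriv_of_convexOn hf] with x interior_of_mem differentiable hxS
  have hx := interior_of_mem hxS
  exact ⟨_, _, hasPeanoSecondDerivAt_of_convexOn hf hx
    (differentiable hx)⟩

end Convex

/-- Alexandrov's theorem in one dimension: a convex function on `ℝ` is twice
differentiable in the Peano sense at Lebesgue-almost every point. -/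
theorem alexandrov_one_dim (f : ℝ → ℝ) (hf : ConvexOn ℝ Set.univ f) :
    ∀ᵐ x ∂(MeasureTheory.volume : MeasureTheory.Measure ℝ),
      ∃ p q : ℝ,
        Filter.Tendsto
          (fun r : ℝ => (f (x + r) - f x - p * r - (q / 2) * r ^ 2) / r ^ 2)
          (nhdsWithin 0 {(0 : ℝ)}ᶜ) (nhds 0) := by
  filter_upwards [alexandrov_one_dim_general hf] with x hx
  exact (hx (mem_univ x)).imp fun p ↦ Exists.imp fun q hpq ↦ hpq.tendsto
end

section
/- For each dimension n ≥ 1 there exists a constant C > 0 (depending only on n) such that: for every nonnegative function g : ℝⁿ → ℝ with g(0) = 0 that is Lipschitz on the closed unit ball B(1) with Lipschitz constant L on B(1), one has sup_{B(1)} g ≤ C (∫_{B(1)} g(x) dx)^{1/(n+1)} · L^{n/(n+1)}. -/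
open MeasureTheory Filter Metric
open scoped Topology ENNReal NNReal

/-!
Let `M = g y` be a value on a ball of radius `R` of a nonnegative function `g` that is
`K`-Lipschitz there. Since `g` vanishes somewhere in the ball, `M ≤ 2 K R`, so `r = M / (4 K)` is at
most `R` and some ball of radius `r` contains `y` and lies in the large ball. Its points are within
`2 r` of `y`, so `g ≥ M / 2` there. Integrating, `∫ g` is at least a constant times
`M * (M / K) ^ d`, where `d` is the dimension.
-/

theorem exists_mem_closedBall_subset_closedBall {E : Type*} [SeminormedAddCommGroup E]
    [NormedSpace ℝ E] {c y : E} {r R : ℝ} (hy : y ∈ closedBall c R) (hr : 0 ≤ r) (hrR : r ≤ R) :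
    ∃ z, y ∈ closedBall z r ∧ closedBall z r ⊆ closedBall c R := by
  have hyc : dist y c ≤ R := hy
  have ht : 0 ≤ r / R := div_nonneg hr (hr.trans hrR)
  have ht' : r / R ≤ 1 := div_le_one_of_le₀ hrR (hr.trans hrR)
  have htR : r / R * R = r := div_mul_cancel_of_imp fun hR ↦ le_antisymm (hR ▸ hrR) hr
  refine ⟨AffineMap.lineMap y c (r / R), ?_, closedBall_subset_closedBall' ?_⟩
  · calc dist y (AffineMap.lineMap y c (r / R)) = r / R * dist y c := by
          rw [dist_left_lineMap, Real.norm_of_nonneg ht]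
      _ ≤ r / R * R := by gcongr
      _ = r := htR
  · calc r + dist (AffineMap.lineMap y c (r / R)) c = r + (1 - r / R) * dist y c := by
          rw [dist_lineMap_right, Real.norm_of_nonneg (sub_nonneg.2 ht')]
      _ ≤ r + (1 - r / R) * R := by gcongr
      _ = R := by rw [sub_mul, htR]; ring

theorem sub_mul_dist_le_of_lipschitzOnWith {α : Type*} [PseudoMetricSpace α] {g : α → ℝ}
    {K : ℝ≥0} {s : Set α} (hg : LipschitzOnWith K g s) {x y : α} (hx : x ∈ s) (hy : y ∈ s) :
    g y - K * dist y x ≤ g x := by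
  have := (le_abs_self _).trans (hg.dist_le_mul y hy x hx)
  linarith

theorem le_mul_two_mul_radius_of_lipschitzOnWith {α : Type*} [PseudoMetricSpace α] {g : α → ℝ}
    {K : ℝ≥0} {c y : α} {R : ℝ} (hg : LipschitzOnWith K g (closedBall c R))
    (hzero : ∃ a ∈ closedBall c R, g a = 0) (hy : y ∈ closedBall c R) :
    g y ≤ K * (2 * R) := by
  obtain ⟨a, ha, hga⟩ := hzero
  calc g y ≤ K * dist y a := by linarith [sub_mul_dist_le_of_lipschitzOnWith hg ha hy]
    _ ≤ K * (2 * R) := by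
      gcongr
      linarith [dist_triangle_right y a c, mem_closedBall.1 hy, mem_closedBall.1 ha]

theorem measureReal_ball_pos {α : Type*} [PseudoMetricSpace α] [ProperSpace α]
    [MeasurableSpace α] (μ : Measure α) [μ.IsOpenPosMeasure] [IsFiniteMeasureOnCompacts μ]
    (x : α) {r : ℝ} (hr : 0 < r) : 0 < μ.real (ball x r) :=
  ENNReal.toReal_pos (measure_ball_pos μ x hr).ne' measure_ball_lt_top.ne

theorem le_rpow_of_pow_succ_le {a b k m : ℝ} {d : ℕ} (ha : 0 ≤ a) (hb : 0 ≤ b) (hk : 0 ≤ k)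
    (hm : 0 ≤ m) (h : m ^ (d + 1) ≤ a * b * k ^ d) :
    m ≤ a ^ (1 / ((d : ℝ) + 1)) * b ^ (1 / ((d : ℝ) + 1)) * k ^ ((d : ℝ) / (d + 1)) :=
  calc m = (m ^ (d + 1)) ^ (1 / ((d : ℝ) + 1)) := by
        rw [one_div, ← Nat.cast_add_one, Real.pow_rpow_inv_natCast hm d.succ_ne_zero]
    _ ≤ (a * b * k ^ d) ^ (1 / ((d : ℝ) + 1)) := by gcongr
    _ = _ := by
      rw [Real.mul_rpow (by positivity) (by positivity), Real.mul_rpow ha hb,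
        ← Real.rpow_natCast k d, ← Real.rpow_mul hk, mul_one_div]

section Haar

open Module

variable {E : Type*} [NormedAddCommGroup E] [NormedSpace ℝ E] [FiniteDimensional ℝ E]
  [MeasurableSpace E] [BorelSpace E] (μ : Measure E) [μ.IsAddHaarMeasure]
  {g : E → ℝ} {K : ℝ≥0} {c y : E} {R : ℝ}

theorem sub_mul_pow_finrank_le_setIntegral_closedBall (hg : LipschitzOnWith K g (closedBall c R))
    (hg0 : ∀ x ∈ closedBall c R, 0 ≤ g x) (hy : y ∈ closedBall c R) {r : ℝ} (hr : 0 ≤ r)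
    (hrR : r ≤ R) :
    (g y - K * (2 * r)) * (r ^ finrank ℝ E * μ.real (ball 0 1)) ≤
      ∫ x in closedBall c R, g x ∂μ := by
  obtain ⟨z, hyz, hsub⟩ := exists_mem_closedBall_subset_closedBall hy hr hrR
  have hint : IntegrableOn g (closedBall c R) μ :=
    hg.continuousOn.integrableOn_compact (isCompact_closedBall c R)
  have hlow : ∀ x ∈ closedBall z r, g y - K * (2 * r) ≤ g x := fun x hx ↦
    calc g y - K * (2 * r) ≤ g y - K * dist y x := by
          gcongr
          linarith [dist_triangle_right y x z, mem_closedBall.1 hyz, mem_closedBall.1 hx]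
      _ ≤ g x := sub_mul_dist_le_of_lipschitzOnWith hg (hsub hx) hy
  calc (g y - K * (2 * r)) * (r ^ finrank ℝ E * μ.real (ball 0 1))
      = (g y - K * (2 * r)) * μ.real (closedBall z r) := by
        rw [Measure.addHaar_real_closedBall μ z hr]
    _ ≤ ∫ x in closedBall z r, g x ∂μ :=
        setIntegral_ge_of_const_le_real measurableSet_closedBall measure_closedBall_lt_top.ne hlow
          (hint.mono_set hsub)
    _ ≤ ∫ x in closedBall c R, g x ∂μ :=
        setIntegral_mono_set hint (ae_restrict_of_forall_mem measurableSet_closedBall hg0)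
          hsub.eventuallyLE

theorem pow_finrank_succ_le_setIntegral_closedBall (hg : LipschitzOnWith K g (closedBall c R))
    (hg0 : ∀ x ∈ closedBall c R, 0 ≤ g x) (hzero : ∃ a ∈ closedBall c R, g a = 0)
    (hy : y ∈ closedBall c R) :
    g y ^ (finrank ℝ E + 1) ≤
      2 * 4 ^ finrank ℝ E / μ.real (ball 0 1) * (∫ x in closedBall c R, g x ∂μ) *
        (K : ℝ) ^ finrank ℝ E := by
  have hbound := le_mul_two_mul_radius_of_lipschitzOnWith hg hzero hy
  rcases (hg0 y hy).eq_or_lt with hgy | hgy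
  · rw [← hgy, zero_pow (Nat.succ_ne_zero _)]
    have := setIntegral_nonneg (μ := μ) measurableSet_closedBall hg0
    positivity
  have hK : 0 < (K : ℝ) := K.coe_nonneg.lt_of_ne fun hK ↦ by
    rw [← hK, zero_mul] at hbound
    exact hbound.not_gt hgy
  have hrR : g y / (4 * K) ≤ R := by
    rw [div_le_iff₀ (by positivity)]
    linarith
  have hv : 0 < μ.real (ball 0 1) := measureReal_ball_pos μ 0 one_pos
  calc g y ^ (finrank ℝ E + 1)
      = 2 * 4 ^ finrank ℝ E / μ.real (ball 0 1) *
          ((g y - K * (2 * (g y / (4 * K)))) *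
            ((g y / (4 * K)) ^ finrank ℝ E * μ.real (ball 0 1))) * (K : ℝ) ^ finrank ℝ E := by
        rw [div_pow, mul_pow]
        field_simp
        ring
    _ ≤ _ := by
        gcongr
        exact sub_mul_pow_finrank_le_setIntegral_closedBall μ hg hg0 hy (by positivity) hrR

theorem sup_le_integral_lipschitz_interpolation_general :
    ∃ C : ℝ, 0 < C ∧
      ∀ (g : E → ℝ) (K : ℝ≥0) (c : E) (R : ℝ),
        (∀ x ∈ closedBall c R, 0 ≤ g x) → (∃ a ∈ closedBall c R, g a = 0) →
        LipschitzOnWith K g (closedBall c R) →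
        sSup (g '' closedBall c R) ≤
          C * (∫ x in closedBall c R, g x ∂μ) ^ (1 / ((finrank ℝ E : ℝ) + 1)) *
            (K : ℝ) ^ ((finrank ℝ E : ℝ) / ((finrank ℝ E : ℝ) + 1)) := by
  have hv : 0 < μ.real (ball 0 1) := measureReal_ball_pos μ 0 one_pos
  refine ⟨(2 * 4 ^ finrank ℝ E / μ.real (ball 0 1)) ^ (1 / ((finrank ℝ E : ℝ) + 1)),
    by positivity, fun g K c R hg0 hzero hg ↦ csSup_le ?_ ?_⟩
  · obtain ⟨a, ha, -⟩ := hzero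
    exact ⟨g a, Set.mem_image_of_mem g ha⟩
  · rintro _ ⟨y, hy, rfl⟩
    exact le_rpow_of_pow_succ_le (by positivity)
      (setIntegral_nonneg measurableSet_closedBall hg0) K.coe_nonneg (hg0 y hy)
      (pow_finrank_succ_le_setIntegral_closedBall μ hg hg0 hzero hy)

end Haar

/-- A supremum bound on the unit ball by an interpolation between the integral and the
Lipschitz constant. -/
theorem sup_le_integral_lipschitz_interpolation (n : ℕ) (hn : 1 ≤ n) :
    ∃ C : ℝ, 0 < C ∧
      ∀ (g : EuclideanSpace ℝ (Fin n) → ℝ) (L : ℝ), 0 ≤ L →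
        (∀ y, 0 ≤ g y) → g 0 = 0 →
        LipschitzOnWith (Real.toNNReal L) g (Metric.closedBall 0 1) →
        sSup (g '' Metric.closedBall 0 1) ≤
          C * (∫ x in Metric.closedBall (0 : EuclideanSpace ℝ (Fin n)) 1, g x) ^
              (1 / ((n : ℝ) + 1)) *
            L ^ ((n : ℝ) / ((n : ℝ) + 1)) := by
  obtain ⟨C, hC, h⟩ := sup_le_integral_lipschitz_interpolation_general
    (volume : Measure (EuclideanSpace ℝ (Fin n)))
  exact ⟨C, hC, fun g L hL hg g0 hLip ↦ by
    simpa only [finrank_euclideanSpace_fin, Real.coe_toNNReal L hL] using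
      h g L.toNNReal 0 1 (fun y _ ↦ hg y) ⟨0, mem_closedBall_self zero_le_one, g0⟩ hLip⟩
end

section
/- Let C > 0, α ∈ (0,1), and let s, G : (0, ∞) → [0, ∞) be functions such that s is bounded on bounded neighborhoods of 0, G(r) = o(r²) as r → 0⁺, and s(r) ≤ C (s(2r) + r²)^α · G(r)^{1−α} for all sufficiently small r > 0. Then s(r) = o(r²) as r → 0⁺. -/
open Filter
open scoped Topology

/-!
Put `X(r) = s(2r) + r²`. Since `G(r) = o(r²) = o(X(r))`, the weighted geometric mean
`X^α G^(1-α) = X (G/X)^(1-α)` is `o(X)`, so `s(r) = o(s(2r) + r²)`. In other words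
`s(r) ≤ θ (s(2r) + r²)` near `0` for every `θ > 0`. For small `θ` the right-hand side maps the
barrier `ε r² + A r³` below itself, whatever `A`; choosing `A` so large that the barrier dominates
the bounded function `s` at one fixed scale, the bound `s ≤ ε r² + A r³` descends dyadically to all
smaller scales.
-/

section

open Asymptotics Set

theorem isLittleO_rpow_mul_rpow_one_sub {ι F : Type*} [SeminormedAddCommGroup F] {l : Filter ι}
    {α : ℝ} {X : ι → ℝ} {G : ι → F} (hα : α < 1) (hX : 0 ≤ᶠ[l] X) (hG : G =o[l] X) :
    (fun i ↦ X i ^ α * ‖G i‖ ^ (1 - α)) =o[l] X := by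
  have hpow : (fun i ↦ ‖G i‖ ^ (1 - α)) =o[l] fun i ↦ X i ^ (1 - α) :=
    hG.norm_left.rpow (sub_pos.2 hα) hX
  refine ((isBigO_refl (fun i ↦ X i ^ α) l).mul_isLittleO hpow).congr' .rfl ?_
  filter_upwards [hX] with i hi
  rw [← Real.rpow_add' hi (by simp), add_sub_cancel, Real.rpow_one]

theorem isLittleO_rpow_rpow_nhdsGT_zero {p q : ℝ} (hpq : p < q) :
    (fun r : ℝ ↦ r ^ q) =o[𝓝[>] 0] fun r ↦ r ^ p := by
  have hone : (fun r : ℝ ↦ r ^ (q - p)) =o[𝓝[>] 0] fun _ ↦ (1 : ℝ) := by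
    rw [isLittleO_one_iff]
    have hcont := Real.continuousAt_rpow_const 0 (q - p) (.inr (sub_pos.2 hpq).le)
    simpa only [ContinuousAt, Real.zero_rpow (sub_pos.2 hpq).ne'] using
      hcont.tendsto.mono_left nhdsWithin_le_nhds
  refine (hone.mul_isBigO (isBigO_refl (fun r : ℝ ↦ r ^ p) _)).congr' ?_ (by simp)
  filter_upwards [self_mem_nhdsWithin] with r hr
  rw [← Real.rpow_add hr, sub_add_cancel]

theorem dilation_induction {K : Type*} [Field K] [LinearOrder K] [IsStrictOrderedRing K]
    [Archimedean K] {c δ : K} {P : K → Prop} (hc : 1 < c)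
    (base : ∀ r ∈ Ioo 0 δ, δ ≤ c * r → P r) (step : ∀ r ∈ Ioo 0 δ, c * r < δ → P (c * r) → P r) :
    ∀ r ∈ Ioo 0 δ, P r := by
  intro r hr
  obtain ⟨n, hn⟩ : ∃ n : ℕ, δ / r < c ^ n := pow_unbounded_of_one_lt _ hc
  replace hn : δ < c ^ n * r := (div_lt_iff₀ hr.1).1 hn
  induction n generalizing r with
  | zero => exact absurd hr.2 (by simpa using hn.le)
  | succ n ih =>
    obtain hle | hlt := le_or_gt δ (c * r)
    · exact base r hr hle
    · exact step r hr hlt <|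
        ih (c * r) ⟨mul_pos (by positivity) hr.1, hlt⟩ (by rwa [← mul_assoc, ← pow_succ])

theorem le_rpow_add_rpow_of_le_mul_dilation {f : ℝ → ℝ} {c δ θ ε A p q : ℝ} (hc : 1 < c)
    (hθ : 0 ≤ θ) (hε : 0 ≤ ε) (hA : 0 ≤ A) (hθp : θ * (ε * c ^ p + 1) ≤ ε) (hθq : θ * c ^ q ≤ 1)
    (hf : ∀ r ∈ Ioo 0 δ, f r ≤ θ * (f (c * r) + r ^ p))
    (hbase : ∀ r ∈ Ioo 0 δ, δ ≤ c * r → f r ≤ A * r ^ q) :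
    ∀ r ∈ Ioo 0 δ, f r ≤ ε * r ^ p + A * r ^ q := by
  have hc₀ : 0 ≤ c := by positivity
  refine dilation_induction hc (fun r hr hδ ↦ ?_) fun r hr _ ih ↦ ?_
  · have hr₀ := hr.1
    exact (hbase r hr hδ).trans (le_add_of_nonneg_left (by positivity))
  · have hr₀ := hr.1
    rw [Real.mul_rpow hc₀ hr₀.le, Real.mul_rpow hc₀ hr₀.le] at ih
    calc f r ≤ θ * (f (c * r) + r ^ p) := hf r hr
      _ ≤ θ * (ε * (c ^ p * r ^ p) + A * (c ^ q * r ^ q) + r ^ p) := by gcongr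
      _ = θ * (ε * c ^ p + 1) * r ^ p + θ * c ^ q * (A * r ^ q) := by ring
      _ ≤ ε * r ^ p + 1 * (A * r ^ q) := by gcongr
      _ = ε * r ^ p + A * r ^ q := by rw [one_mul]

theorem exists_pos_mul_add_one_le_and_mul_le_one {ε a b : ℝ} (hε : 0 < ε) (ha : 0 ≤ a)
    (hb : 0 < b) : ∃ θ > 0, θ * (ε * a + 1) ≤ ε ∧ θ * b ≤ 1 :=
  ⟨min (ε / (ε * a + 1)) (1 / b), by positivity,
    (le_div_iff₀ (by positivity)).1 (min_le_left _ _), (le_div_iff₀ hb).1 (min_le_right _ _)⟩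

theorem exists_eventually_le_rpow_add_rpow {f : ℝ → ℝ} {c ε p q : ℝ} (hc : 1 < c) (hε : 0 < ε)
    (hq : 0 ≤ q) (hbdd : f =O[𝓝[>] 0] fun _ ↦ (1 : ℝ))
    (hf : ∀ θ > 0, ∀ᶠ r in 𝓝[>] 0, f r ≤ θ * (f (c * r) + r ^ p)) :
    ∃ A, ∀ᶠ r in 𝓝[>] 0, f r ≤ ε * r ^ p + A * r ^ q := by
  have hc₀ : 0 < c := by positivity
  obtain ⟨θ, hθ, hθp, hθq⟩ := exists_pos_mul_add_one_le_and_mul_le_one hε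
    (Real.rpow_nonneg hc₀.le p) (Real.rpow_pos_of_pos hc₀ q)
  obtain ⟨M, hM, hbound⟩ := hbdd.exists_pos
  obtain ⟨δ, hδ, hsub⟩ := mem_nhdsGT_iff_exists_Ioo_subset.1 (hbound.bound.and (hf θ hθ))
  rw [mem_Ioi] at hδ
  have hbase : ∀ r ∈ Ioo 0 δ, δ ≤ c * r → f r ≤ M * (c / δ) ^ q * r ^ q := by
    intro r hr hδr
    have hone : 1 ≤ (c / δ * r) ^ q :=
      Real.one_le_rpow (by rwa [div_mul_eq_mul_div, one_le_div hδ]) hq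
    calc f r ≤ M := (le_abs_self _).trans (by simpa using (hsub hr).1)
      _ ≤ M * (c / δ * r) ^ q := le_mul_of_one_le_right hM.le hone
      _ = M * (c / δ) ^ q * r ^ q := by rw [Real.mul_rpow (by positivity) hr.1.le, mul_assoc]
  exact ⟨M * (c / δ) ^ q, mem_of_superset (Ioo_mem_nhdsGT hδ) <|
    le_rpow_add_rpow_of_le_mul_dilation hc hθ.le hε.le (by positivity) hθp hθq
      (fun r hr ↦ (hsub hr).2) hbase⟩

variable {E F : Type*} [SeminormedAddCommGroup E] [SeminormedAddCommGroup F]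

theorem isLittleO_rpow_of_isLittleO_dilation {s : ℝ → E} {c p : ℝ} (hc : 1 < c)
    (hbdd : s =O[𝓝[>] 0] fun _ ↦ (1 : ℝ))
    (hs : s =o[𝓝[>] 0] fun r ↦ ‖s (c * r)‖ + r ^ p) :
    s =o[𝓝[>] 0] fun r ↦ r ^ p := by
  have hdil : ∀ θ > 0, ∀ᶠ r in 𝓝[>] 0, ‖s r‖ ≤ θ * (‖s (c * r)‖ + r ^ p) := by
    intro θ hθ
    filter_upwards [hs.def hθ, self_mem_nhdsWithin] with r hr hr₀
    rw [mem_Ioi] at hr₀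
    rwa [Real.norm_of_nonneg (by positivity)] at hr
  rw [isLittleO_iff]
  intro ε hε
  obtain ⟨A, hA⟩ := exists_eventually_le_rpow_add_rpow (q := |p| + 1) hc (half_pos hε)
    (by positivity) hbdd.norm_left hdil
  have hdecay : (fun r : ℝ ↦ A * r ^ (|p| + 1)) =o[𝓝[>] 0] fun r ↦ r ^ p :=
    (isLittleO_rpow_rpow_nhdsGT_zero ((le_abs_self p).trans_lt (lt_add_one _))).const_mul_left A
  filter_upwards [hA, hdecay.def (half_pos hε), self_mem_nhdsWithin] with r hr hAr hr₀
  rw [Real.norm_of_nonneg (Real.rpow_nonneg (le_of_lt hr₀) p)] at hAr ⊢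
  linarith [Real.le_norm_self (A * r ^ (|p| + 1))]

theorem iteration_lemma_general {s : ℝ → E} {G : ℝ → F} {c p α : ℝ} (hc : 1 < c) (hα : α < 1)
    (hbdd : s =O[𝓝[>] 0] fun _ ↦ (1 : ℝ)) (hG : G =o[𝓝[>] 0] fun r ↦ r ^ p)
    (hrec : s =O[𝓝[>] 0] fun r ↦ (‖s (c * r)‖ + r ^ p) ^ α * ‖G r‖ ^ (1 - α)) :
    s =o[𝓝[>] 0] fun r ↦ r ^ p := by
  have hpow : ∀ᶠ r : ℝ in 𝓝[>] 0, 0 ≤ r ^ p := by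
    filter_upwards [self_mem_nhdsWithin] with r hr using Real.rpow_nonneg (le_of_lt hr) p
  have hX : ∀ᶠ r in 𝓝[>] 0, 0 ≤ ‖s (c * r)‖ + r ^ p :=
    hpow.mono fun r hr ↦ add_nonneg (norm_nonneg _) hr
  have hGX : G =o[𝓝[>] 0] fun r ↦ ‖s (c * r)‖ + r ^ p := by
    refine hG.trans_isBigO (Eventually.isBigO ?_)
    filter_upwards [hpow] with r hr
    rw [Real.norm_of_nonneg hr]
    exact le_add_of_nonneg_left (norm_nonneg _)
  exact isLittleO_rpow_of_isLittleO_dilation hc hbdd <|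
    hrec.trans_isLittleO (isLittleO_rpow_mul_rpow_one_sub hα hX hGX)

theorem isLittleO_rpow_two_nhdsGT_zero_iff_tendsto_div {f : ℝ → ℝ} :
    (f =o[𝓝[>] 0] fun r ↦ r ^ (2 : ℝ)) ↔ Tendsto (fun r ↦ f r / r ^ 2) (𝓝[>] 0) (𝓝 0) := by
  simp only [Real.rpow_two]
  refine isLittleO_iff_tendsto' ?_
  filter_upwards [self_mem_nhdsWithin] with r hr hr2
  exact absurd hr2 (pow_ne_zero 2 (ne_of_gt hr))

end

/-- A self-improving iteration lemma: if `s` is bounded near `0`, `G(r) = o(r²)`, and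
`s(r) ≤ C (s(2r) + r²)^α G(r)^(1-α)` for small `r`, then `s(r) = o(r²)`. -/
theorem iteration_lemma (C α : ℝ) (hC : 0 < C) (hα : α ∈ Set.Ioo (0 : ℝ) 1)
    (s G : ℝ → ℝ) (hs_nonneg : ∀ r > (0 : ℝ), 0 ≤ s r) (hG_nonneg : ∀ r > (0 : ℝ), 0 ≤ G r)
    (hs_bdd : ∃ M : ℝ, ∃ δ > (0 : ℝ), ∀ r ∈ Set.Ioo (0 : ℝ) δ, s r ≤ M)
    (hG : Filter.Tendsto (fun r => G r / r ^ 2) (nhdsWithin 0 (Set.Ioi 0)) (nhds 0))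
    (hrec : ∃ r₀ > (0 : ℝ), ∀ r ∈ Set.Ioo (0 : ℝ) r₀,
      s r ≤ C * (s (2 * r) + r ^ 2) ^ α * G r ^ (1 - α)) :
    Filter.Tendsto (fun r => s r / r ^ 2) (nhdsWithin 0 (Set.Ioi 0)) (nhds 0) := by
  obtain ⟨M, δ, hδ, hM⟩ := hs_bdd
  obtain ⟨r₀, hr₀, hrec⟩ := hrec
  rw [← isLittleO_rpow_two_nhdsGT_zero_iff_tendsto_div] at hG ⊢
  refine iteration_lemma_general one_lt_two hα.2 (.of_bound M ?_) hG (.of_bound C ?_)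
  · filter_upwards [Ioo_mem_nhdsGT hδ] with r hr
    simpa [abs_of_nonneg (hs_nonneg r hr.1)] using hM r hr
  · filter_upwards [Ioo_mem_nhdsGT hr₀] with r hr
    have hs2r := hs_nonneg (2 * r) (mul_pos two_pos hr.1)
    have hGr := hG_nonneg r hr.1
    rw [Real.rpow_two, Real.norm_of_nonneg (hs_nonneg r hr.1), Real.norm_of_nonneg hs2r,
      Real.norm_of_nonneg hGr, Real.norm_of_nonneg (by positivity), ← mul_assoc]
    exact hrec r hr
end

section
/- (Busemann–Feller–Alexandrov theorem.) Let f : ℝ^d → ℝ be a convex function. Then for Lebesgue-almost every x ∈ ℝ^d there exist a vector p ∈ ℝ^d and a symmetric d × d real matrix Q such that lim_{h → 0} |f(x + h) − f(x) − ⟨p, h⟩ − (1/2)⟨Q h, h⟩| / ‖h‖² = 0; that is, f is second differentiable almost everywhere. -/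
open MeasureTheory Filter Metric
open scoped Topology ENNReal NNReal RealInnerProductSpace

/-- The quadratic form `⟨M y, y⟩` of a matrix `M`. -/
noncomputable def quadForm (d : ℕ) (M : Matrix (Fin d) (Fin d) ℝ)
    (y : EuclideanSpace ℝ (Fin d)) : ℝ :=
  ∑ i, ∑ j, M i j * y i * y j

/-!
Choose a subgradient `y x` of `f` at every point `x`. Monotonicity of `y` makes `z x = x + y x`
expanding, so `z` has a Lipschitz left inverse `g` (Minty's trick). Since `x = g (z x)`,
Rademacher's theorem and Sard's lemma show that for almost every `x` the map `g` has an
invertible derivative at `z x`. If moreover `f` is differentiable at `x`, then `y` is continuous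
there, hence `z`, and with it `y`, is differentiable at `x`. Integrating the first-order
expansion of `y` along segments gives the second-order expansion of `f`.
-/

open Set Asymptotics

section Subgradient

variable {E : Type*} [NormedAddCommGroup E] [InnerProductSpace ℝ E]
  {f : E → ℝ} {s : Set E} {x w p q h : E}

/-- `p` is a subgradient of `f` at `x` relative to `s`: the affine function with slope `p` that
agrees with `f` at `x` lies below `f` on `s`. Membership of `x` in `s` is not part of the notion. -/
def HasSubgradientWithinAt (f : E → ℝ) (p : E) (s : Set E) (x : E) : Prop :=
  ∀ w ∈ s, f x + ⟪p, w - x⟫ ≤ f w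

theorem exists_continuousLinearMap_le_of_convexOn_of_isOpen {F : Type*} [AddCommGroup F]
    [Module ℝ F] [TopologicalSpace F] [IsTopologicalAddGroup F] [ContinuousSMul ℝ F]
    {f : F → ℝ} {s : Set F} {x : F}
    (hs : IsOpen s) (hf : ConvexOn ℝ s f) (hc : ContinuousOn f s) (hx : x ∈ s) :
    ∃ l : F →L[ℝ] ℝ, ∀ w ∈ s, f x + l (w - x) ≤ f w := by
  have epigraph_open : IsOpen {a : F × ℝ | a.1 ∈ s ∧ f a.1 < a.2} := by
    have hc' : ContinuousOn (fun a : F × ℝ => a.2 - f a.1) (Prod.fst ⁻¹' s) :=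
      continuousOn_snd.sub (hc.comp continuousOn_fst fun _ ha => ha)
    convert! hc'.isOpen_inter_preimage (hs.preimage continuous_fst) (isOpen_Ioi (a := 0)) using 1
    ext a
    simp
  obtain ⟨g, hg⟩ := geometric_hahn_banach_open_point (x := (x, f x)) hf.convex_strict_epigraph
    epigraph_open fun hmem => lt_irrefl _ hmem.2
  let l : F →L[ℝ] ℝ := g.comp (.inl ℝ F ℝ)
  set c := g (0, 1)
  have g_apply (w : F) (r : ℝ) : g (w, r) = l w + r * c := by
    have decompose : (w, r) = (w, 0) + r • ((0 : F), (1 : ℝ)) := by simp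
    rw [decompose, map_add, map_smul, smul_eq_mul]
    rfl
  have separation (w : F) (hw : w ∈ s) (r : ℝ) (hr : f w < r) : l w + r * c < l x + f x * c := by
    simpa only [g_apply] using hg (w, r) ⟨hw, hr⟩
  have c_neg : c < 0 := by linarith [separation x hx (f x + 1) (lt_add_one _)]
  refine ⟨(-c)⁻¹ • l, fun w hw => le_of_forall_gt fun r hr => ?_⟩
  have : (-c)⁻¹ * (l w - l x) < r - f x := by
    rw [inv_mul_lt_iff₀ (neg_pos.2 c_neg)]
    linarith [separation w hw r hr]
  simp only [smul_apply, smul_eq_mul, map_sub]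
  linarith

theorem exists_hasSubgradientWithinAt_of_convexOn [CompleteSpace E] (hs : IsOpen s)
    (hf : ConvexOn ℝ s f) (hc : ContinuousOn f s) (hx : x ∈ s) :
    ∃ p, HasSubgradientWithinAt f p s x := by
  obtain ⟨l, hl⟩ := exists_continuousLinearMap_le_of_convexOn_of_isOpen hs hf hc hx
  refine ⟨(InnerProductSpace.toDual ℝ E).symm l, fun w hw => ?_⟩
  rw [InnerProductSpace.toDual_symm_apply]
  exact hl w hw

namespace HasSubgradientWithinAt

theorem inner_sub_sub_nonneg (hp : HasSubgradientWithinAt f p s x)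
    (hq : HasSubgradientWithinAt f q s w) (hx : x ∈ s) (hw : w ∈ s) : 0 ≤ ⟪x - w, p - q⟫ := by
  have hpw := hp w hw
  rw [← neg_sub x w, inner_neg_right] at hpw
  rw [real_inner_comm, inner_sub_left]
  linarith [hq x hx]

theorem comp_add_smul {t : ℝ} (hp : HasSubgradientWithinAt f p s (x + t • h)) :
    HasSubgradientWithinAt (fun r : ℝ => f (x + r • h)) ⟪p, h⟫ ((fun r : ℝ => x + r • h) ⁻¹' s)
      t := by
  intro r hr
  have := hp _ hr
  rwa [add_sub_add_left_eq_sub, ← sub_smul, real_inner_smul_right] at this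

theorem le_slope {φ : ℝ → ℝ} {I : Set ℝ} {m a b : ℝ} (hm : HasSubgradientWithinAt φ m I a)
    (hb : b ∈ I) (hab : a < b) : m ≤ slope φ a b := by
  have : φ a + (b - a) * m ≤ φ b := hm b hb
  rw [slope_def_field, le_div_iff₀ (sub_pos.2 hab)]
  linarith

theorem slope_le {φ : ℝ → ℝ} {I : Set ℝ} {m a b : ℝ} (hm : HasSubgradientWithinAt φ m I b)
    (ha : a ∈ I) (hab : a < b) : slope φ a b ≤ m := by
  have : φ b + (a - b) * m ≤ φ a := hm a ha
  rw [slope_def_field, div_le_iff₀ (sub_pos.2 hab)]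
  linarith

end HasSubgradientWithinAt

end Subgradient

section ContinuityOfSubgradients

variable {E : Type*} [NormedAddCommGroup E] [InnerProductSpace ℝ E]
  {f : E → ℝ} {s : Set E} {x p q u : E} {r ε C : ℝ}

theorem norm_le_of_forall_inner_le (hr : 0 < r) (h : ∀ v, ‖v‖ ≤ r → ⟪u, v⟫ ≤ C * r) :
    ‖u‖ ≤ C := by
  rcases eq_or_ne u 0 with rfl | hu
  · have := h 0 (by simpa using hr.le)
    rw [inner_zero_right] at this
    simpa using nonneg_of_mul_nonneg_left this hr
  · have hu' : 0 < ‖u‖ := norm_pos_iff.2 hu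
    have := h ((r / ‖u‖) • u) (by simp [norm_smul, hu'.ne', abs_of_pos hr])
    rw [real_inner_smul_right, real_inner_self_eq_norm_sq] at this
    refine le_of_mul_le_mul_right (le_of_eq_of_le ?_ this) hr
    field_simp

theorem HasSubgradientWithinAt.norm_sub_le {h : E} (hq : HasSubgradientWithinAt f q s (x + h))
    (hr : 0 < r) (hε : 0 ≤ ε) (hh : ‖h‖ ≤ r) (hs : ∀ v, ‖v‖ ≤ 2 * r → x + v ∈ s)
    (hp : ∀ v, ‖v‖ ≤ 2 * r → |f (x + v) - f x - ⟪p, v⟫| ≤ ε * ‖v‖) : ‖q - p‖ ≤ 3 * ε := by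
  refine norm_le_of_forall_inner_le hr fun v hv => ?_
  have hhv : ‖h + v‖ ≤ 2 * r := (norm_add_le h v).trans (by linarith)
  have subgradient_at_h : f (x + h) + ⟪q, v⟫ ≤ f (x + (h + v)) := by
    simpa [← add_assoc] using hq _ (hs _ hhv)
  have expansion_at_h : -(ε * r) ≤ f (x + h) - f x - ⟪p, h⟫ :=
    (neg_le_neg (by gcongr)).trans (abs_le.1 (hp h (by linarith))).1
  have expansion_at_h_add_v : f (x + (h + v)) - f x - ⟪p, h + v⟫ ≤ ε * (2 * r) :=
    (abs_le.1 (hp _ hhv)).2.trans (by gcongr)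
  rw [inner_add_right] at expansion_at_h_add_v
  rw [inner_sub_left]
  linarith

theorem tendsto_subgradient_of_hasGradientAt [CompleteSpace E] {y : E → E} (hs : s ∈ 𝓝 x)
    (hy : ∀ w ∈ s, HasSubgradientWithinAt f (y w) s w) (hp : HasGradientAt f p x) :
    Tendsto y (𝓝 x) (𝓝 p) := by
  rw [← map_add_left_nhds_zero x, tendsto_map'_iff, Metric.tendsto_nhds]
  intro ε hε
  have mem_s : ∀ᶠ v in 𝓝 (0 : E), x + v ∈ s :=
    (continuous_const_add x).continuousAt.eventually (by simpa using hs)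
  have expansion := (hasGradientAt_iff_isLittleO_nhds_zero.1 hp).def (show 0 < ε / 4 by positivity)
  obtain ⟨δ, hδ, hball⟩ := Metric.eventually_nhds_iff_ball.1 (mem_s.and expansion)
  have mem_ball {v : E} (hv : ‖v‖ ≤ 2 * (δ / 3)) : v ∈ ball (0 : E) δ := by
    rw [mem_ball_zero_iff]
    linarith
  filter_upwards [ball_mem_nhds (0 : E) (show 0 < δ / 3 by positivity)] with h hh
  rw [mem_ball_zero_iff] at hh
  have : ‖y (x + h) - p‖ ≤ 3 * (ε / 4) :=
    (hy _ (hball h (mem_ball (by linarith))).1).norm_sub_le (show 0 < δ / 3 by positivity)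
      (by positivity) hh.le (fun v hv => (hball v (mem_ball hv)).1)
      (fun v hv => (hball v (mem_ball hv)).2)
  rw [Function.comp_apply, dist_eq_norm]
  linarith

end ContinuityOfSubgradients

section MeanValueInequality

variable {φ ψ B B' : ℝ → ℝ} {a b C : ℝ}

theorem sub_le_sub_of_deriv_le_subgradient (hab : a ≤ b) (hφ : ContinuousOn φ (Icc a b))
    (hψ : ∀ t ∈ Icc a b, HasSubgradientWithinAt φ (ψ t) (Icc a b) t)
    (hB : ∀ t ∈ Icc a b, HasDerivAt B (B' t) t) (hle : ∀ t ∈ Icc a b, B' t ≤ ψ t) :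
    B b - B a ≤ φ b - φ a := by
  have fence : -φ b ≤ -B b + (B a - φ a) := by
    refine image_le_of_liminf_slope_right_le_deriv_boundary (f := -φ) (a := a) (b := b)
      (B := fun t => -B t + (B a - φ a)) (B' := fun t => -B' t) hφ.neg (by simp)
      (fun t ht => (hB t ht).continuousAt.neg.add_const _ |>.continuousWithinAt)
      (fun t ht => ((hB t (Ico_subset_Icc_self ht)).neg.add_const _).hasDerivWithinAt)
      (fun t ht r hr => Eventually.frequently ?_) (right_mem_Icc.2 hab)
    filter_upwards [Ioc_mem_nhdsGT ht.2] with u hu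
    have htI := Ico_subset_Icc_self ht
    have := (hψ t htI).le_slope ⟨ht.1.trans hu.1.le, hu.2⟩ hu.1
    rw [slope_neg_fun, Pi.neg_apply, Pi.neg_apply]
    linarith [hle t htI]
  linarith

theorem sub_le_sub_of_subgradient_le_deriv (hab : a ≤ b) (hφ : ContinuousOn φ (Icc a b))
    (hψ : ∀ t ∈ Icc a b, HasSubgradientWithinAt φ (ψ t) (Icc a b) t)
    (hB : ∀ t ∈ Icc a b, HasDerivAt B (B' t) t) (hB' : ContinuousOn B' (Icc a b))
    (hle : ∀ t ∈ Icc a b, ψ t ≤ B' t) : φ b - φ a ≤ B b - B a := by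
  have fence : φ b ≤ B b + (φ a - B a) := by
    refine image_le_of_liminf_slope_right_le_deriv_boundary (f := φ) (a := a) (b := b)
      (B := fun t => B t + (φ a - B a)) (B' := B') hφ (by simp)
      (fun t ht => (hB t ht).continuousAt.add_const _ |>.continuousWithinAt)
      (fun t ht => ((hB t (Ico_subset_Icc_self ht)).add_const _).hasDerivWithinAt)
      (fun t ht r hr => Eventually.frequently ?_) (right_mem_Icc.2 hab)
    have htI := Ico_subset_Icc_self ht
    have B'_lt : ∀ᶠ u in 𝓝[>] t, B' u < r :=
      ((hB' t htI).mono_of_mem_nhdsWithin (mem_of_superset (Ioc_mem_nhdsGT ht.2) fun u hu =>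
        ⟨ht.1.trans hu.1.le, hu.2⟩)).eventually_lt_const hr
    filter_upwards [Ioc_mem_nhdsGT ht.2, B'_lt] with u hu hur
    have huI : u ∈ Icc a b := ⟨ht.1.trans hu.1.le, hu.2⟩
    exact ((hψ u huI).slope_le htI hu.1).trans_lt ((hle u huI).trans_lt hur)
  linarith

theorem abs_sub_sub_sub_le_of_abs_subgradient_sub_deriv_le (hab : a ≤ b)
    (hφ : ContinuousOn φ (Icc a b))
    (hψ : ∀ t ∈ Icc a b, HasSubgradientWithinAt φ (ψ t) (Icc a b) t)
    (hB : ∀ t ∈ Icc a b, HasDerivAt B (B' t) t) (hB' : ContinuousOn B' (Icc a b))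
    (hC : ∀ t ∈ Icc a b, |ψ t - B' t| ≤ C) : |φ b - φ a - (B b - B a)| ≤ C * (b - a) := by
  have deriv_add (c t : ℝ) (ht : t ∈ Icc a b) :
      HasDerivAt (fun t => B t + c * t) (B' t + c) t := by
    simpa using! (hB t ht).add ((hasDerivAt_id t).const_mul c)
  have lower := sub_le_sub_of_deriv_le_subgradient hab hφ hψ (deriv_add (-C)) fun t ht => by
    linarith [(abs_le.1 (hC t ht)).1]
  have upper := sub_le_sub_of_subgradient_le_deriv hab hφ hψ (deriv_add C)
    (hB'.add continuousOn_const) fun t ht => by linarith [(abs_le.1 (hC t ht)).2]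
  rw [abs_le]
  constructor <;> linarith

end MeanValueInequality

section SecondOrderExpansion

variable {E : Type*} [NormedAddCommGroup E] [InnerProductSpace ℝ E]
  {f : E → ℝ} {s : Set E} {x p h : E} {y : E → E} {A : E →L[ℝ] E} {ε : ℝ}

/-- Second differentiability of `f` at `x` in the sense of Peano, with gradient `p` and with
Hessian form `h ↦ ⟪A h, h⟫`. The operator `A` is not required to be symmetric, so it is not
determined by `f`. -/
def HasSecondOrderExpansionAt (f : E → ℝ) (p : E) (A : E →L[ℝ] E) (x : E) : Prop :=
  (fun h => f (x + h) - f x - ⟪p, h⟫ - (1 / 2) * ⟪A h, h⟫) =o[𝓝 0] fun h => ‖h‖ ^ 2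

theorem HasSecondOrderExpansionAt.tendsto_abs_div (hf : HasSecondOrderExpansionAt f p A x) :
    Tendsto (fun h => |f (x + h) - f x - ⟪p, h⟫ - (1 / 2) * ⟪A h, h⟫| / ‖h‖ ^ 2)
      (𝓝[≠] 0) (𝓝 0) :=
  (IsLittleO.abs_left hf).tendsto_div_nhds_zero.mono_left nhdsWithin_le_nhds

theorem abs_second_order_remainder_le (hc : ContinuousOn f s)
    (hy : ∀ w ∈ s, HasSubgradientWithinAt f (y w) s w)
    (hseg : ∀ t ∈ Icc (0 : ℝ) 1, x + t • h ∈ s)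
    (hA : ∀ t ∈ Icc (0 : ℝ) 1, ‖y (x + t • h) - p - A (t • h)‖ ≤ ε * ‖h‖) :
    |f (x + h) - f x - ⟪p, h⟫ - (1 / 2) * ⟪A h, h⟫| ≤ ε * ‖h‖ ^ 2 := by
  have slope_bound (t : ℝ) (ht : t ∈ Icc (0 : ℝ) 1) :
      |⟪y (x + t • h), h⟫ - (⟪p, h⟫ + t * ⟪A h, h⟫)| ≤ ε * ‖h‖ ^ 2 :=
    calc |⟪y (x + t • h), h⟫ - (⟪p, h⟫ + t * ⟪A h, h⟫)|
        = |⟪y (x + t • h) - p - A (t • h), h⟫| := by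
          rw [inner_sub_left, inner_sub_left, map_smul, real_inner_smul_left, sub_sub]
      _ ≤ ‖y (x + t • h) - p - A (t • h)‖ * ‖h‖ := abs_real_inner_le_norm _ _
      _ ≤ ε * ‖h‖ * ‖h‖ := by gcongr; exact hA t ht
      _ = ε * ‖h‖ ^ 2 := by ring
  have model_deriv (t : ℝ) : HasDerivAt (fun t => t * ⟪p, h⟫ + t ^ 2 / 2 * ⟪A h, h⟫)
      (⟪p, h⟫ + t * ⟪A h, h⟫) t := by
    convert! ((hasDerivAt_id t).mul_const ⟪p, h⟫).add
      (((hasDerivAt_pow 2 t).div_const 2).mul_const ⟪A h, h⟫) using 1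
    simp
  have main := abs_sub_sub_sub_le_of_abs_subgradient_sub_deriv_le
    (φ := fun t : ℝ => f (x + t • h)) zero_le_one
    (hc.comp (by fun_prop) hseg)
    (fun t ht w hw => (hy _ (hseg t ht)).comp_add_smul w (hseg w hw))
    (fun t _ => model_deriv t) (by fun_prop) slope_bound
  simp only [one_smul, zero_smul, add_zero, sub_zero, mul_one] at main
  convert! main using 2
  ring

theorem hasSecondOrderExpansionAt_of_hasFDerivAt_subgradient (hs : s ∈ 𝓝 x)
    (hc : ContinuousOn f s) (hy : ∀ w ∈ s, HasSubgradientWithinAt f (y w) s w)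
    (hA : HasFDerivAt y A x) : HasSecondOrderExpansionAt f (y x) A x := by
  refine isLittleO_iff.2 fun ε hε => ?_
  have mem_s : ∀ᶠ v in 𝓝 (0 : E), x + v ∈ s :=
    (continuous_const_add x).continuousAt.eventually (by simpa using hs)
  have expansion := (hasFDerivAt_iff_isLittleO_nhds_zero.1 hA).def hε
  obtain ⟨δ, hδ, hball⟩ := Metric.eventually_nhds_iff_ball.1 (mem_s.and expansion)
  filter_upwards [ball_mem_nhds (0 : E) hδ] with h hh
  have norm_le_one {t : ℝ} (ht : t ∈ Icc (0 : ℝ) 1) : ‖t‖ ≤ 1 := by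
    rw [Real.norm_of_nonneg ht.1]
    exact ht.2
  have smul_mem {t : ℝ} (ht : t ∈ Icc (0 : ℝ) 1) : t • h ∈ ball (0 : E) δ :=
    balanced_ball_zero.smul_mem (norm_le_one ht) hh
  rw [Real.norm_eq_abs, norm_pow, norm_norm]
  refine abs_second_order_remainder_le hc hy (fun t ht => (hball _ (smul_mem ht)).1)
    fun t ht => (hball _ (smul_mem ht)).2.trans ?_
  rw [norm_smul]
  gcongr
  exact mul_le_of_le_one_left (norm_nonneg h) (norm_le_one ht)

end SecondOrderExpansion

section AlmostEverywhereDifferentiability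

variable {E : Type*} [NormedAddCommGroup E] [NormedSpace ℝ E] [FiniteDimensional ℝ E]

theorem exists_lipschitzWith_leftInvOn {X : Type*} [PseudoMetricSpace X] {K : ℝ≥0} {z : E → X}
    {s : Set E} (hz : AntilipschitzWith K (s.domRestrict z)) :
    ∃ (C : ℝ≥0) (g : X → E), LipschitzWith C g ∧ LeftInvOn g z s := by
  have hinv : LeftInvOn (Function.invFunOn z s) z s :=
    (injOn_iff_injective.2 hz.injective).leftInvOn_invFunOn
  have hlip : LipschitzOnWith K (Function.invFunOn z s) (z '' s) :=
    lipschitzOnWith_iff_restrict.2 <| hz.to_rightInvOn'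
      (fun _ hw => Function.invFunOn_mem hw) fun _ hw => Function.invFunOn_eq hw
  obtain ⟨g, hg, hgz⟩ := hlip.extend_finite_dimension
  exact ⟨_, g, hg, fun x hx => (hgz (mem_image_of_mem z hx)).symm.trans (hinv hx)⟩

variable [MeasurableSpace E] [BorelSpace E] (μ : Measure E) [μ.IsAddHaarMeasure] {s : Set E}

theorem ae_differentiableAt_of_locallyLipschitzOn {F : Type*} [NormedAddCommGroup F]
    [NormedSpace ℝ F] [FiniteDimensional ℝ F] {f : E → F} (hs : IsOpen s)
    (hf : LocallyLipschitzOn s f) : ∀ᵐ x ∂μ, x ∈ s → DifferentiableAt ℝ f x := by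
  refine measure_null_of_locally_null _ fun x hx => ?_
  obtain ⟨hxs, -⟩ := Classical.not_imp.1 hx
  obtain ⟨K, t, ht, hK⟩ := hf hxs
  rw [hs.nhdsWithin_eq hxs] at ht
  refine ⟨_, inter_mem_nhdsWithin _ (interior_mem_nhds.2 ht), measure_mono_null ?_
    (ae_iff.1 (hK.ae_differentiableWithinAt_of_mem (μ := μ)))⟩
  rintro w ⟨hw, hwt⟩ hdiff
  exact hw fun _ => (hdiff (interior_subset hwt)).differentiableAt (mem_interior_iff_mem_nhds.1 hwt)

theorem addHaar_image_eq_zero_of_lipschitzOnWith {g : E → E} {K : ℝ≥0}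
    (hg : LipschitzOnWith K g s) (hs : μ s = 0) : μ (g '' s) = 0 := by
  let ν : Measure E := Measure.hausdorffMeasure (Module.finrank ℝ E)
  have hνs : ν s = 0 := Measure.absolutelyContinuous_isAddHaarMeasure ν μ hs
  have hνg : ν (g '' s) ≤ 0 := by
    simpa only [ν, hνs, mul_zero] using!
      hg.hausdorffMeasure_image_le (Nat.cast_nonneg (Module.finrank ℝ E))
  exact Measure.absolutelyContinuous_isAddHaarMeasure μ ν (nonpos_iff_eq_zero.1 hνg)

theorem ae_det_fderiv_ne_zero_of_lipschitzWith_leftInvOn {z g : E → E} {K : ℝ≥0}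
    (hg : LipschitzWith K g) (hgz : LeftInvOn g z s) :
    ∀ᵐ x ∂μ, x ∈ s → DifferentiableAt ℝ g (z x) ∧ (fderiv ℝ g (z x)).det ≠ 0 := by
  have nondifferentiable_values_null : μ (g '' {w | ¬DifferentiableAt ℝ g w}) = 0 :=
    addHaar_image_eq_zero_of_lipschitzOnWith μ hg.lipschitzOnWith hg.ae_differentiableAt
  have critical_values_null :
      μ (g '' {w | DifferentiableAt ℝ g w ∧ (fderiv ℝ g w).det = 0}) = 0 :=
    addHaar_image_eq_zero_of_det_fderivWithin_eq_zero μ (f' := fderiv ℝ g)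
      (fun w hw => hw.1.hasFDerivAt.hasFDerivWithinAt) fun w hw => hw.2
  filter_upwards [measure_eq_zero_iff_ae_notMem.1 nondifferentiable_values_null,
    measure_eq_zero_iff_ae_notMem.1 critical_values_null] with x hnondiff hcritical hx
  have hdiff : DifferentiableAt ℝ g (z x) := by
    by_contra hnot
    exact hnondiff ⟨z x, hnot, hgz hx⟩
  exact ⟨hdiff, fun hdet => hcritical ⟨z x, ⟨hdiff, hdet⟩, hgz hx⟩⟩

theorem ae_differentiableAt_of_lipschitzWith_leftInvOn {z g : E → E} {K : ℝ≥0} (hs : IsOpen s)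
    (hg : LipschitzWith K g) (hgz : LeftInvOn g z s) :
    ∀ᵐ x ∂μ, x ∈ s → ContinuousAt z x → DifferentiableAt ℝ z x := by
  filter_upwards [ae_det_fderiv_ne_zero_of_lipschitzWith_leftInvOn μ hg hgz] with x hx hxs hz
  obtain ⟨hdiff, hdet⟩ := hx hxs
  have hg' : HasFDerivAt g
      ((fderiv ℝ g (z x)).toContinuousLinearEquivOfDetNeZero hdet : E →L[ℝ] E) (z x) := by
    rw [ContinuousLinearMap.coe_toContinuousLinearEquivOfDetNeZero]
    exact hdiff.hasFDerivAt
  exact (HasFDerivAt.of_local_left_inverse hz hg'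
    (hgz.eqOn.eventuallyEq_of_mem (hs.mem_nhds hxs))).differentiableAt

end AlmostEverywhereDifferentiability

section Alexandrov

variable {E : Type*} [NormedAddCommGroup E] [InnerProductSpace ℝ E] {f : E → ℝ} {s : Set E}

theorem antilipschitzWith_add_subgradient {y : E → E}
    (hy : ∀ w ∈ s, HasSubgradientWithinAt f (y w) s w) :
    AntilipschitzWith 1 (s.domRestrict fun x => x + y x) := by
  refine AntilipschitzWith.of_le_mul_dist fun ⟨x, hx⟩ ⟨w, hw⟩ => ?_
  have monotone : 0 ≤ ⟪x - w, y x - y w⟫ := (hy x hx).inner_sub_sub_nonneg (hy w hw) hx hw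
  have expand := norm_add_sq_real (x - w) (y x - y w)
  rw [NNReal.coe_one, one_mul, Subtype.dist_eq, dist_eq_norm, dist_eq_norm]
  simp only [domRestrict_apply, add_sub_add_comm]
  exact le_of_sq_le_sq (by linarith [sq_nonneg ‖y x - y w‖]) (norm_nonneg _)

theorem exists_isSymmetric_inner_self_eq [CompleteSpace E] (A : E →L[ℝ] E) :
    ∃ S : E →L[ℝ] E, S.IsSymmetric ∧ ∀ h, ⟪S h, h⟫ = ⟪A h, h⟫ := by
  refine ⟨(1 / 2 : ℝ) • (A + A.adjoint), ?_, fun h => ?_⟩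
  · exact ContinuousLinearMap.isSelfAdjoint_iff_isSymmetric.1
      ((IsSelfAdjoint.all (1 / 2 : ℝ)).smul (IsSelfAdjoint.add_star_self A))
  · simp only [smul_apply, add_apply, real_inner_smul_left, inner_add_left,
      ContinuousLinearMap.adjoint_inner_left, real_inner_comm (A h) h]
    ring

variable [FiniteDimensional ℝ E] [MeasurableSpace E] [BorelSpace E]
  (μ : Measure E) [μ.IsAddHaarMeasure]

theorem ae_differentiableAt_subgradient {y : E → E} (hs : IsOpen s)
    (hf : LocallyLipschitzOn s f) (hy : ∀ w ∈ s, HasSubgradientWithinAt f (y w) s w) :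
    ∀ᵐ x ∂μ, x ∈ s → DifferentiableAt ℝ y x := by
  have : CompleteSpace E := FiniteDimensional.complete ℝ E
  obtain ⟨K, g, hg, hgz⟩ := exists_lipschitzWith_leftInvOn (antilipschitzWith_add_subgradient hy)
  filter_upwards [ae_differentiableAt_of_locallyLipschitzOn μ hs hf,
    ae_differentiableAt_of_lipschitzWith_leftInvOn μ hs hg hgz] with x hfx hzx hx
  have hyc : ContinuousAt y x := continuousAt_of_tendsto_nhds
    (tendsto_subgradient_of_hasGradientAt (hs.mem_nhds hx) hy (hfx hx).hasGradientAt)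
  simpa using (hzx hx (continuousAt_id.add hyc)).sub differentiableAt_id

theorem busemann_feller_alexandrov_general (hf : ConvexOn ℝ s f) :
    ∀ᵐ x ∂μ, x ∈ s → ∃ (p : E) (A : E →L[ℝ] E),
      A.IsSymmetric ∧ HasSecondOrderExpansionAt f p A x := by
  have : CompleteSpace E := FiniteDimensional.complete ℝ E
  have hf' : ConvexOn ℝ (interior s) f := hf.subset interior_subset hf.1.interior
  have hlip : LocallyLipschitzOn (interior s) f := hf'.locallyLipschitzOn isOpen_interior
  choose! y hy using fun w (hw : w ∈ interior s) =>
    exists_hasSubgradientWithinAt_of_convexOn isOpen_interior hf' hlip.continuousOn hw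
  filter_upwards [measure_eq_zero_iff_ae_notMem.1 (hf.1.addHaar_frontier μ),
    ae_differentiableAt_subgradient μ isOpen_interior hlip hy] with x hfrontier hdiff hx
  have hxi : x ∈ interior s := self_sdiff_frontier s ▸ ⟨hx, hfrontier⟩
  obtain ⟨S, hS, hSA⟩ := exists_isSymmetric_inner_self_eq (fderiv ℝ y x)
  have expansion := hasSecondOrderExpansionAt_of_hasFDerivAt_subgradient
    (isOpen_interior.mem_nhds hxi) hlip.continuousOn hy (hdiff hxi).hasFDerivAt
  exact ⟨y x, S, hS, by simpa only [HasSecondOrderExpansionAt, hSA] using expansion⟩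

end Alexandrov

theorem quadForm_eq_inner_toEuclideanLin (d : ℕ) (Q : Matrix (Fin d) (Fin d) ℝ)
    (h : EuclideanSpace ℝ (Fin d)) : quadForm d Q h = ⟪Q.toEuclideanLin h, h⟫ := by
  simp only [quadForm, PiLp.inner_apply, Matrix.ofLp_toLpLin, Matrix.toLin'_apply, Matrix.mulVec,
    dotProduct, Real.inner_apply, Finset.sum_mul]
  exact Finset.sum_congr rfl fun i _ => Finset.sum_congr rfl fun j _ => by ring

theorem exists_isSymm_quadForm_eq_inner {d : ℕ}
    {A : EuclideanSpace ℝ (Fin d) →ₗ[ℝ] EuclideanSpace ℝ (Fin d)} (hA : A.IsSymmetric) :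
    ∃ Q : Matrix (Fin d) (Fin d) ℝ, Q.IsSymm ∧ ∀ h, quadForm d Q h = ⟪A h, h⟫ := by
  obtain ⟨Q, rfl⟩ := Matrix.toEuclideanLin.surjective A
  refine ⟨Q, ?_, quadForm_eq_inner_toEuclideanLin d Q⟩
  rw [Matrix.IsSymm, ← Matrix.conjTranspose_eq_transpose_of_trivial]
  exact Matrix.isSymmetric_toEuclideanLin_iff.1 hA

/-- Busemann–Feller–Alexandrov theorem: a convex function on `ℝ^d` is twice
differentiable (in the Peano sense) at Lebesgue-almost every point. -/
theorem busemann_feller_alexandrov (d : ℕ)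
    (f : EuclideanSpace ℝ (Fin d) → ℝ) (hf : ConvexOn ℝ Set.univ f) :
    ∀ᵐ x ∂(volume : Measure (EuclideanSpace ℝ (Fin d))),
      ∃ (p : EuclideanSpace ℝ (Fin d)) (Q : Matrix (Fin d) (Fin d) ℝ),
        Q.IsSymm ∧
        Filter.Tendsto
          (fun h : EuclideanSpace ℝ (Fin d) =>
            |f (x + h) - f x - ⟪p, h⟫ - (1 / 2) * quadForm d Q h| / ‖h‖ ^ 2)
          (nhdsWithin 0 {(0 : EuclideanSpace ℝ (Fin d))}ᶜ) (nhds 0) := by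
  filter_upwards [busemann_feller_alexandrov_general volume hf] with x hx
  obtain ⟨p, A, hA, hexp⟩ := hx (Set.mem_univ x)
  obtain ⟨Q, hQ, hQA⟩ := exists_isSymm_quadForm_eq_inner hA
  exact ⟨p, Q, hQ, by simpa only [hQA, ContinuousLinearMap.coe_coe] using hexp.tendsto_abs_div⟩
end
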